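/- arXiv:1803.10846 — 2 statements merged into one kernel-verified Lean document; each statement's English description precedes it below -/
import Mathlib

section
/- Let A, Ã ∈ ℝ^{n×n} be symmetric matrices with nonnegative entries and zero diagonal (weighted adjacency matrices), let D, D̃ be the diagonal matrices with D_{i,i} = Σ_j A_{i,j} and D̃_{i,i} = Σ_j Ã_{i,j}, and let L = D − A and L̃ = D̃ − Ã be the corresponding graph Laplacians. Assume D_{i,i} > 0 for all i, 0 < ε < 1, and (1−ε)L ⪯ L̃ ⪯ L. Then: (1) (1−ε) D_{i,i} ≤ D̃_{i,i} ≤ D_{i,i} for every i; and (2) ‖D^{-1/2}(Ã − A)D^{-1/2}‖ ≤ 3ε, where ‖·‖ is the spectral norm. -/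
open scoped BigOperators
open Matrix

/-- Spectral (ℓ₂ operator) norm of a real matrix. -/
noncomputable def specNorm {n : ℕ} (A : Matrix (Fin n) (Fin n) ℝ) : ℝ :=
  ‖LinearMap.toContinuousLinearMap (Matrix.toEuclideanLin A)‖

/-- The degree matrix of a weighted adjacency matrix. -/
noncomputable def degMat {n : ℕ} (A : Matrix (Fin n) (Fin n) ℝ) : Matrix (Fin n) (Fin n) ℝ :=
  Matrix.diagonal fun i => ∑ j, A i j

/-- The graph Laplacian `L = D − A`. -/
noncomputable def lap {n : ℕ} (A : Matrix (Fin n) (Fin n) ℝ) : Matrix (Fin n) (Fin n) ℝ :=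
  degMat A - A

/-- The diagonal matrix `D^{-1/2}`. -/
noncomputable def invSqrtDeg {n : ℕ} (A : Matrix (Fin n) (Fin n) ℝ) :
    Matrix (Fin n) (Fin n) ℝ :=
  Matrix.diagonal fun i => (Real.sqrt (∑ j, A i j))⁻¹

lemma specNorm_le_aux {n : ℕ} (M : Matrix (Fin n) (Fin n) ℝ) (hM : Mᵀ = M) (c : ℝ) (hc : 0 < c)
    (h : ∀ v : Fin n → ℝ, |v ⬝ᵥ (M *ᵥ v)| ≤ c * (v ⬝ᵥ v)) : specNorm M ≤ c := by
  unfold specNorm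
  refine ContinuousLinearMap.opNorm_le_bound _ hc.le ?_
  intro x
  have key : ∀ v : Fin n → ℝ, (M *ᵥ v) ⬝ᵥ (M *ᵥ v) ≤ c ^ 2 * (v ⬝ᵥ v) := by
    intro v
    set w := M *ᵥ v with hw
    have hs : v ⬝ᵥ (M *ᵥ w) = w ⬝ᵥ w := by
      rw [Matrix.dotProduct_mulVec, ← Matrix.mulVec_transpose, hM]
    have h1 := (abs_le.mp (h (c • v + w))).2
    have h2 := (abs_le.mp (h (c • v - w))).1
    simp only [Matrix.mulVec_add, Matrix.mulVec_sub, Matrix.mulVec_smul, add_dotProduct,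
      sub_dotProduct, dotProduct_add, dotProduct_sub, smul_dotProduct, dotProduct_smul,
      smul_eq_mul, hs, ← hw] at h1 h2
    have h3 : c * (w ⬝ᵥ w) ≤ c * (c ^ 2 * (v ⬝ᵥ v)) := by
      nlinarith
    exact le_of_mul_le_mul_left h3 hc
  have hk := key (WithLp.ofLp x)
  refine (pow_le_pow_iff_left₀ (norm_nonneg _) (by positivity) two_ne_zero).mp ?_
  rw [mul_pow, EuclideanSpace.real_norm_sq_eq, EuclideanSpace.real_norm_sq_eq]
  simpa [dotProduct, sq] using hk

lemma quad_lap {n : ℕ} (A : Matrix (Fin n) (Fin n) ℝ) (x : Fin n → ℝ) :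
    x ⬝ᵥ (lap A *ᵥ x) = ∑ i, (∑ j, A i j) * x i ^ 2 - x ⬝ᵥ (A *ᵥ x) := by
  unfold lap degMat
  rw [Matrix.sub_mulVec, dotProduct_sub]
  congr 1
  simp only [dotProduct, Matrix.mulVec_diagonal]
  exact Finset.sum_congr rfl fun i _ => by ring

lemma quad_add_nonneg {n : ℕ} (A : Matrix (Fin n) (Fin n) ℝ) (hs : Aᵀ = A)
    (hA0 : ∀ i j, 0 ≤ A i j) (x : Fin n → ℝ) :
    0 ≤ ∑ i, (∑ j, A i j) * x i ^ 2 + x ⬝ᵥ (A *ᵥ x) := by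
  have h0 : 0 ≤ ∑ i, ∑ j, A i j * (x i + x j) ^ 2 :=
    Finset.sum_nonneg fun i _ => Finset.sum_nonneg fun j _ => mul_nonneg (hA0 i j) (sq_nonneg _)
  have h1 : ∑ i, ∑ j, A i j * x j ^ 2 = ∑ i, ∑ j, A i j * x i ^ 2 := by
    rw [Finset.sum_comm]
    refine Finset.sum_congr rfl fun i _ => Finset.sum_congr rfl fun j _ => ?_
    rw [show A j i = A i j from congrFun (congrFun hs i) j]
  have h2 : x ⬝ᵥ (A *ᵥ x) = ∑ i, ∑ j, A i j * (x i * x j) := by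
    simp only [dotProduct, Matrix.mulVec, Finset.mul_sum]
    exact Finset.sum_congr rfl fun i _ => Finset.sum_congr rfl fun j _ => by ring
  have h3 : ∑ i, ∑ j, A i j * (x i + x j) ^ 2 = ∑ i, ∑ j, A i j * x i ^ 2
      + 2 * ∑ i, ∑ j, A i j * (x i * x j) + ∑ i, ∑ j, A i j * x j ^ 2 := by
    simp only [Finset.mul_sum, ← Finset.sum_add_distrib]
    exact Finset.sum_congr rfl fun i _ => Finset.sum_congr rfl fun j _ => by ring
  simp only [Finset.sum_mul]
  linarith

/-- If `A, Ã` are weighted adjacency matrices with Laplacians `L, L̃`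
satisfying `(1−ε)L ⪯ L̃ ⪯ L`, then the degrees satisfy `(1−ε)Dᵢᵢ ≤ D̃ᵢᵢ ≤ Dᵢᵢ` and
`‖D^{-1/2}(Ã − A)D^{-1/2}‖ ≤ 3ε`. -/
theorem stmt3 {n : ℕ} (ε : ℝ) (hε0 : 0 < ε) (hε1 : ε < 1)
    (A At : Matrix (Fin n) (Fin n) ℝ)
    (hAsym : Aᵀ = A) (hAtsym : Atᵀ = At)
    (hA0 : ∀ i j, 0 ≤ A i j) (hAt0 : ∀ i j, 0 ≤ At i j)
    (hAd : ∀ i, A i i = 0) (hAtd : ∀ i, At i i = 0)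
    (hdeg : ∀ i, 0 < ∑ j, A i j)
    (hlow : (lap At - (1 - ε) • lap A).PosSemidef)
    (hup : (lap A - lap At).PosSemidef) :
    (∀ i, (1 - ε) * (∑ j, A i j) ≤ (∑ j, At i j) ∧ (∑ j, At i j) ≤ ∑ j, A i j) ∧
      specNorm (invSqrtDeg A * (At - A) * invSqrtDeg A) ≤ 3 * ε := by
  have hD : ∀ i, (1 - ε) * (∑ j, A i j) ≤ (∑ j, At i j) ∧ (∑ j, At i j) ≤ ∑ j, A i j := by
    intro i
    have h1 := hlow.diag_nonneg (i := i)
    have h2 := hup.diag_nonneg (i := i)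
    simp [lap, degMat, hAd, hAtd] at h1 h2
    exact ⟨by linarith, by linarith⟩
  refine ⟨hD, ?_⟩
  have hB : ∀ x : Fin n → ℝ, |x ⬝ᵥ ((At - A) *ᵥ x)| ≤ 3 * ε * ∑ i, (∑ j, A i j) * x i ^ 2 := by
    intro x
    have h1 := hlow.dotProduct_mulVec_nonneg x
    have h2 := hup.dotProduct_mulVec_nonneg x
    simp only [star_trivial, Matrix.sub_mulVec, Matrix.smul_mulVec, dotProduct_sub,
      dotProduct_smul, smul_eq_mul, quad_lap] at h1 h2
    have h3 := quad_add_nonneg A hAsym hA0 x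
    have h4 : ∑ i, (∑ j, At i j) * x i ^ 2 ≤ ∑ i, (∑ j, A i j) * x i ^ 2 :=
      Finset.sum_le_sum fun i _ => mul_le_mul_of_nonneg_right (hD i).2 (sq_nonneg _)
    have h5 : (1 - ε) * ∑ i, (∑ j, A i j) * x i ^ 2 ≤ ∑ i, (∑ j, At i j) * x i ^ 2 := by
      rw [Finset.mul_sum]
      refine Finset.sum_le_sum fun i _ => ?_
      rw [← mul_assoc]
      exact mul_le_mul_of_nonneg_right (hD i).1 (sq_nonneg _)
    have h6 : 0 ≤ ∑ i, (∑ j, A i j) * x i ^ 2 :=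
      Finset.sum_nonneg fun i _ => mul_nonneg (hdeg i).le (sq_nonneg _)
    rw [Matrix.sub_mulVec, dotProduct_sub, abs_le]
    have h7 := mul_nonneg hε0.le h3
    have h8 := mul_nonneg hε0.le h6
    constructor <;> nlinarith
  apply specNorm_le_aux _ _ _ (by positivity)
  · intro v
    have h := hB (invSqrtDeg A *ᵥ v)
    have e1 : (invSqrtDeg A *ᵥ v) ⬝ᵥ ((At - A) *ᵥ (invSqrtDeg A *ᵥ v))
        = v ⬝ᵥ ((invSqrtDeg A * (At - A) * invSqrtDeg A) *ᵥ v) := by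
      rw [← Matrix.mulVec_mulVec, ← Matrix.mulVec_mulVec, Matrix.dotProduct_mulVec v,
        ← Matrix.mulVec_transpose]
      simp [invSqrtDeg]
    have e2 : ∑ i, (∑ j, A i j) * (invSqrtDeg A *ᵥ v) i ^ 2 = v ⬝ᵥ v := by
      refine Finset.sum_congr rfl fun i _ => ?_
      have := hdeg i
      simp only [invSqrtDeg, Matrix.mulVec_diagonal]
      rw [mul_pow, inv_pow, Real.sq_sqrt this.le, ← mul_assoc, mul_inv_cancel₀ this.ne', one_mul, sq]
    rwa [e1, e2] at h
  · simp [invSqrtDeg, Matrix.transpose_mul, hAsym, hAtsym, Matrix.mul_assoc]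
end

section
/- Let U, U* ∈ ℝ^{n×r}, and let R be an orthogonal r×r matrix minimizing ‖U − U*R‖_F over all orthogonal r×r matrices. Set Δ = U − U*R, M = UUᵀ, M* = U*(U*)ᵀ, and let σ*_r denote the r-th largest singular value of M*. Then ‖ΔΔᵀ‖_F² ≤ 2‖M − M*‖_F², and σ*_r ‖Δ‖_F² ≤ (1/(2(√2 − 1))) ‖M − M*‖_F². -/
open scoped BigOperators
open Matrix

/-- Squared Frobenius norm of a real matrix. -/
noncomputable def frobSq {ι κ : Type*} [Fintype ι] [Fintype κ] (A : Matrix ι κ ℝ) : ℝ :=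
  ∑ i, ∑ j, (A i j) ^ 2

/-- Frobenius norm of a real matrix. -/
noncomputable def frob {ι κ : Type*} [Fintype ι] [Fintype κ] (A : Matrix ι κ ℝ) : ℝ :=
  Real.sqrt (frobSq A)

/-- The minimum eigenvalue of a symmetric matrix, characterized as the largest `t`
with `tI ⪯ A`.  For `r ≤ n`, the `r`-th largest singular value of the PSD matrix
`U*(U*)ᵀ ∈ ℝ^{n×n}` equals the minimum eigenvalue of the Gram matrix
`(U*)ᵀU* ∈ ℝ^{r×r}`. -/
noncomputable def minEig {r : ℕ} (A : Matrix (Fin r) (Fin r) ℝ) : ℝ :=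
  sSup {t : ℝ | (A - t • (1 : Matrix (Fin r) (Fin r) ℝ)).PosSemidef}


lemma aux_frobSq {n r : ℕ} (A : Matrix (Fin n) (Fin r) ℝ) : frobSq A = trace (Aᵀ * A) := by
  simp only [frobSq, trace, diag_apply, mul_apply, transpose_apply]
  rw [Finset.sum_comm]
  simp only [sq]

lemma aux_frobSq_nonneg {n r : ℕ} (A : Matrix (Fin n) (Fin r) ℝ) : 0 ≤ frobSq A := by
  unfold frobSq; positivity

noncomputable def hh {r : ℕ} (v : Fin r → ℝ) : Matrix (Fin r) (Fin r) ℝ :=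
  1 - (2 / (v ⬝ᵥ v)) • vecMulVec v v

lemma hh_orth {r : ℕ} (v : Fin r → ℝ) (hv : v ⬝ᵥ v ≠ 0) : (hh v)ᵀ * hh v = 1 := by
  have h1 : (hh v)ᵀ = hh v := by simp [hh, transpose_vecMulVec]
  rw [h1]
  simp only [hh, Matrix.sub_mul, Matrix.mul_sub, Matrix.mul_one, Matrix.one_mul, smul_mul_smul_comm,
    vecMulVec_mul_vecMulVec, vecMulVec_smul, smul_smul]
  ext i j
  simp
  field_simp
  ring

lemma hh_trace {r : ℕ} (N : Matrix (Fin r) (Fin r) ℝ) (v : Fin r → ℝ) :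
    trace (N * hh v) = trace N - (2 / (v ⬝ᵥ v)) * (v ⬝ᵥ (N *ᵥ v)) := by
  simp [hh, Matrix.mul_sub, mul_vecMulVec, trace_vecMulVec, dotProduct_comm]

lemma psd_of_max {r : ℕ} (N : Matrix (Fin r) (Fin r) ℝ)
    (hN : ∀ Q : Matrix (Fin r) (Fin r) ℝ, Qᵀ * Q = 1 → trace (N * Q) ≤ trace N) :
    N.PosSemidef := by
  have hpos : ∀ v : Fin r → ℝ, 0 ≤ v ⬝ᵥ (N *ᵥ v) := by
    intro v
    by_cases hv : v ⬝ᵥ v = 0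
    · have : v = 0 := by simpa using hv
      simp [this]
    · have h := hN _ (hh_orth v hv)
      rw [hh_trace] at h
      have hv' : 0 < v ⬝ᵥ v := lt_of_le_of_ne
        (Finset.sum_nonneg fun i _ => mul_self_nonneg (v i)) (Ne.symm hv)
      have h2 : 0 ≤ (2 / (v ⬝ᵥ v)) * (v ⬝ᵥ (N *ᵥ v)) := by linarith
      exact nonneg_of_mul_nonneg_right h2 (by positivity)
  have hsym : ∀ i j, i ≠ j → N i j = N j i := by
    intro i j hij
    have key : ∀ p : ℝ, p * (N j i - N i j) ≤ N i i + N j j := by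
      intro p
      set u : Fin r → ℝ := Pi.single i 1 with hu
      set v : Fin r → ℝ := p • Pi.single i 1 + Pi.single j 1 with hv
      have huu : u ⬝ᵥ u = 1 := by simp [hu]
      have hvv : v ⬝ᵥ v = p ^ 2 + 1 := by
        simp [hv, hij, hij.symm, add_dotProduct]; ring
      have hvv' : v ⬝ᵥ v ≠ 0 := by rw [hvv]; positivity
      have horth : (hh u * hh v)ᵀ * (hh u * hh v) = 1 := by
        rw [transpose_mul, Matrix.mul_assoc, ← Matrix.mul_assoc (hh u)ᵀ,
          hh_orth u (by rw [huu]; norm_num), Matrix.one_mul, hh_orth v hvv']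
      have h := hN _ horth
      rw [← Matrix.mul_assoc, hh_trace, hh_trace, huu, hvv] at h
      have e1 : u ⬝ᵥ (N *ᵥ u) = N i i := by simp [hu]
      have e2 : v ⬝ᵥ ((N * hh u) *ᵥ v) = -p^2 * N i i + p * N i j - p * N j i + N j j := by
        have : hh u *ᵥ v = -p • Pi.single i 1 + Pi.single j 1 := by
          rw [hh, huu, Matrix.sub_mulVec, smul_mulVec, vecMulVec_mulVec]
          ext k
          simp [hu, hv, hij]
          ring
        rw [← mulVec_mulVec, this]
        simp [hv, mulVec_add, mulVec_smul, add_dotProduct, mulVec_neg]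
        ring
      rw [e1, e2] at h
      have hp : (0:ℝ) < p^2+1 := by positivity
      have h3 : 0 ≤ (p^2+1) * N i i + (-p^2 * N i i + p * N i j - p * N j i + N j j) := by
        have : 0 ≤ (2 / 1 * N i i + 2 / (p^2+1) * (-p^2 * N i i + p * N i j - p * N j i + N j j)) := by
          linarith
        have := mul_nonneg hp.le this
        field_simp at this
        nlinarith
      nlinarith
    by_contra hne
    have hd : N j i - N i j ≠ 0 := fun h => hne (by linarith)
    have := key ((N i i + N j j + 1) / (N j i - N i j))
    rw [div_mul_cancel₀ _ hd] at this
    linarith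
  refine PosSemidef.of_dotProduct_mulVec_nonneg ?_ ?_
  · ext i j
    by_cases h : i = j
    · subst h; simp
    · simpa using hsym j i (Ne.symm h)
  · intro x; simpa using hpos x

lemma aux_conj {n r : ℕ} (P : Matrix (Fin r) (Fin r) ℝ) (hP : P.PosSemidef)
    (D : Matrix (Fin n) (Fin r) ℝ) : 0 ≤ trace (P * (Dᵀ * D)) := by
  have h := (hP.mul_mul_conjTranspose_same D).trace_nonneg
  rw [conjTranspose_eq_transpose_of_trivial, Matrix.mul_assoc, trace_mul_comm, Matrix.mul_assoc] at h
  exact h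

/-- If `R` is an orthogonal matrix minimizing `‖U − U*R‖_F` and
`Δ = U − U*R`, then `‖ΔΔᵀ‖_F² ≤ 2‖UUᵀ − U*(U*)ᵀ‖_F²` and
`σ*_r ‖Δ‖_F² ≤ ‖UUᵀ − U*(U*)ᵀ‖_F² / (2(√2 − 1))`, where `σ*_r` is the `r`-th largest
singular value of `M* = U*(U*)ᵀ`. -/
theorem stmt13 {n r : ℕ} (hrn : r ≤ n)
    (U Ustar : Matrix (Fin n) (Fin r) ℝ)
    (R : Matrix (Fin r) (Fin r) ℝ) (hR : Rᵀ * R = 1)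
    (hRmin : ∀ R' : Matrix (Fin r) (Fin r) ℝ, R'ᵀ * R' = 1 →
      frob (U - Ustar * R) ≤ frob (U - Ustar * R')) :
    ∀ (Δ : Matrix (Fin n) (Fin r) ℝ), Δ = U - Ustar * R →
      frobSq (Δ * Δᵀ) ≤ 2 * frobSq (U * Uᵀ - Ustar * Ustarᵀ) ∧
      minEig (Ustarᵀ * Ustar) * frobSq Δ ≤
        (1 / (2 * (Real.sqrt 2 - 1))) * frobSq (U * Uᵀ - Ustar * Ustarᵀ) := by
  rintro Δ rfl
  set V := Ustar * R with hV
  have hRR : R * Rᵀ = 1 := mul_eq_one_comm.mp hR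
  have hVV : Ustar * Ustarᵀ = V * Vᵀ := by
    rw [hV, transpose_mul, Matrix.mul_assoc, ← Matrix.mul_assoc R, hRR, Matrix.one_mul]
  have hN : (Uᵀ * V).PosSemidef := by
    apply psd_of_max
    intro Q hQ
    have h := hRmin (R * Q) (by
      rw [transpose_mul, Matrix.mul_assoc, ← Matrix.mul_assoc Rᵀ, hR, Matrix.one_mul, hQ])
    rw [← Matrix.mul_assoc, ← hV, frob, frob, Real.sqrt_le_sqrt_iff (aux_frobSq_nonneg _)] at h
    have hQQ : Q * Qᵀ = 1 := mul_eq_one_comm.mp hQ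
    have e : ∀ W : Matrix (Fin n) (Fin r) ℝ,
        frobSq (U - W) = trace (Uᵀ * U) - 2 * trace (Uᵀ * W) + trace (Wᵀ * W) := by
      intro W
      have : trace (Wᵀ * U) = trace (Uᵀ * W) := by
        rw [← trace_transpose, transpose_mul, transpose_transpose]
      rw [aux_frobSq, transpose_sub, Matrix.sub_mul, Matrix.mul_sub, Matrix.mul_sub]
      simp only [trace_sub, this]
      ring
    have e2 : trace ((V * Q)ᵀ * (V * Q)) = trace (Vᵀ * V) := by
      rw [transpose_mul, Matrix.mul_assoc, trace_mul_comm]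
      simp only [Matrix.mul_assoc, hQQ, Matrix.mul_one]
    rw [e, e, e2, ← Matrix.mul_assoc Uᵀ V Q] at h
    linarith
  have hsymN : Vᵀ * U = Uᵀ * V := by
    have := hN.1
    rw [IsHermitian, conjTranspose_eq_transpose_of_trivial, transpose_mul, transpose_transpose] at this
    exact this
  set Δ := U - V with hΔ
  have hU : U = V + Δ := by simp [hΔ]
  set A := Vᵀ * V with hA
  set D := Δᵀ * Δ with hD
  set P := Uᵀ * V with hP
  set S := Vᵀ * Δ with hS
  have hSP : S = P - A := by rw [hS, hΔ, Matrix.mul_sub, hsymN]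
  have hAt : Aᵀ = A := by simp [hA]
  have hDt : Dᵀ = D := by simp [hD]
  have hPt : Pᵀ = P := by rw [hP, transpose_mul, transpose_transpose, hsymN]
  have hSt : Sᵀ = S := by rw [hSP, transpose_sub, hAt, hPt]
  have hS' : Δᵀ * V = S := by rw [← hSt, hS, transpose_mul, transpose_transpose]
  have hDD : frobSq (Δ * Δᵀ) = trace (D * D) := by
    rw [aux_frobSq, transpose_mul, transpose_transpose, Matrix.mul_assoc, trace_mul_comm]
    simp only [hD, Matrix.mul_assoc]
  have tr4 : ∀ X Y Z W : Matrix (Fin n) (Fin r) ℝ,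
      trace (X * Yᵀ * (Z * Wᵀ)) = trace ((Wᵀ * X) * (Yᵀ * Z)) := by
    intro X Y Z W
    rw [← Matrix.mul_assoc, trace_mul_comm]
    simp only [Matrix.mul_assoc]
  have hM : frobSq (U * Uᵀ - Ustar * Ustarᵀ) =
      2 * trace (A * D) + 2 * trace (S * S) + trace (D * D) + 4 * trace (S * D) := by
    have e : U * Uᵀ - Ustar * Ustarᵀ = Δ * Vᵀ + V * Δᵀ + Δ * Δᵀ := by
      rw [hVV, hU, transpose_add]
      simp only [Matrix.add_mul, Matrix.mul_add]
      abel
    rw [e, aux_frobSq]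
    simp only [transpose_add, transpose_mul, transpose_transpose, Matrix.add_mul, Matrix.mul_add,
      trace_add, tr4, ← hA, ← hD, ← hS, hS']
    rw [trace_mul_comm D A, trace_mul_comm D S]
    ring
  have hsq : ∀ c : ℝ, 0 ≤ c^2 * trace (S * S) + 2 * c * trace (S * D) + trace (D * D) := by
    intro c
    have h := aux_frobSq_nonneg (c • S + D)
    rw [aux_frobSq, transpose_add, transpose_smul, hSt, hDt] at h
    simp only [Matrix.add_mul, Matrix.mul_add, trace_add, Matrix.smul_mul, Matrix.mul_smul,
      trace_smul, smul_eq_mul, trace_mul_comm D S] at h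
    linarith
  have hPD : 0 ≤ trace (P * D) := aux_conj P hN Δ
  have hSD : trace (S * D) = trace (P * D) - trace (A * D) := by
    rw [hSP, Matrix.sub_mul, trace_sub]
  have h2 : Real.sqrt 2 ^ 2 = 2 := Real.sq_sqrt (by norm_num)
  have h21 : 1 < Real.sqrt 2 := by
    rw [Real.lt_sqrt] <;> norm_num
  have h22 : Real.sqrt 2 < 2 := by
    rw [Real.sqrt_lt'] <;> norm_num
  constructor
  · rw [hDD, hM]
    have := hsq 2
    linarith
  · have hmain : 2 * (Real.sqrt 2 - 1) * trace (A * D) ≤ frobSq (U * Uᵀ - Ustar * Ustarᵀ) := by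
      have := hsq (Real.sqrt 2)
      rw [h2] at this
      rw [hM]
      have h5 := mul_nonneg (show 0 ≤ 4 - 2 * Real.sqrt 2 by linarith) hPD
      have h6 : trace (P * D) = trace (S * D) + trace (A * D) := by linarith
      rw [h6] at h5
      nlinarith
    have hmin : minEig (Ustarᵀ * Ustar) * frobSq Δ ≤ trace (A * D) := by
      have hA0 : 0 ≤ trace (A * D) := aux_conj A (by
        have := posSemidef_conjTranspose_mul_self V
        rwa [conjTranspose_eq_transpose_of_trivial] at this) Δ
      rcases (aux_frobSq_nonneg Δ).eq_or_lt with h0 | h0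
      · rw [← h0, mul_zero]; exact hA0
      · rw [← le_div_iff₀ h0]
        refine Real.sSup_le ?_ (by positivity)
        intro t ht
        rw [le_div_iff₀ h0, aux_frobSq, ← hD]
        have h7 := ht.conjTranspose_mul_mul_same R
        rw [conjTranspose_eq_transpose_of_trivial] at h7
        have e : Rᵀ * (Ustarᵀ * Ustar - t • (1 : Matrix (Fin r) (Fin r) ℝ)) * R
            = A - t • (1 : Matrix (Fin r) (Fin r) ℝ) := by
          rw [Matrix.mul_sub, Matrix.sub_mul, Matrix.mul_smul, Matrix.smul_mul, Matrix.mul_one, hR,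
            hA, hV, transpose_mul]
          simp only [Matrix.mul_assoc]
        rw [e] at h7
        have h8 := aux_conj _ h7 Δ
        rw [← hD, Matrix.sub_mul, trace_sub, Matrix.smul_mul, Matrix.one_mul, trace_smul,
          smul_eq_mul] at h8
        linarith
    refine hmin.trans ?_
    rw [one_div, inv_mul_eq_div, le_div_iff₀ (by linarith)]
    linarith
end
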